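/- Let H be an arbitrary abelian group and let κ > 2^(2^𝔠), where 𝔠 = 2^{ℵ₀} is the cardinality of the continuum. If f : {0} ∪ [κ]^4 → H^# is a continuous map, where {0} ∪ [κ]^4 ⊆ B_κ carries the topology induced from B_κ^#, then there exists an infinite S ⊆ κ such that f is linear on {0} ∪ [S]^4. -/

import Mathlib

open scoped Pointwise

/-- The Bohr topology on an abelian group `G`: the initial topology induced by the
family of all group homomorphisms from `G` to the circle group `ℝ/ℤ`. -/
noncomputable def bohrTopology (G : Type*) [AddCommGroup G] : TopologicalSpace G :=
  ⨅ χ : G →+ AddCircle (1 : ℝ), TopologicalSpace.induced χ inferInstance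

/-- The set `{0} ∪ [S]⁴` inside the Boolean group `B_κ = ⊕_κ ℤ/2ℤ`. -/
def zeroUnionQuadruples {κ : Type*} (S : Set κ) : Set (κ →₀ ZMod 2) :=
  {x | x = 0 ∨ (x.support.card = 4 ∧ ↑x.support ⊆ S)}


abbrev BQ : Type := ℚ × AddCircle (1 : ℚ)

instance BQ_countable : Countable BQ := by
  have : Countable (AddCircle (1 : ℚ)) := by
    exact (QuotientAddGroup.mk_surjective (s := AddSubgroup.zmultiples (1 : ℚ))).countable
  infer_instance

/-- Every cyclic group embeds in `BQ`. -/
theorem exists_bq {H : Type*} [AddCommGroup H] (x : H) :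
    ∃ q : BQ, ∀ n : ℤ, n • q = 0 ↔ n • x = 0 := by
  by_cases hx : IsOfFinAddOrder x
  · have hpos := hx.addOrderOf_pos
    have : NeZero (addOrderOf x) := ⟨hpos.ne'⟩
    have : Fact (0 < (1 : ℚ)) := ⟨by norm_num⟩
    refine ⟨(0, (((1 : ℚ) / addOrderOf x : ℚ) : AddCircle (1 : ℚ))), fun n => ?_⟩
    rw [← addOrderOf_dvd_iff_zsmul_eq_zero (x := x), Prod.ext_iff]
    simp only [Prod.smul_fst, Prod.smul_snd, smul_zero, Prod.fst_zero, Prod.snd_zero, true_and]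
    rw [← addOrderOf_dvd_iff_zsmul_eq_zero, AddCircle.addOrderOf_period_div hpos]
  · refine ⟨(1, 0), fun n => ?_⟩
    rw [Prod.ext_iff]
    simp only [Prod.smul_fst, Prod.smul_snd, smul_zero, Prod.fst_zero, Prod.snd_zero, and_true]
    rw [isOfFinAddOrder_iff_zsmul_eq_zero] at hx
    push Not at hx
    constructor
    · intro h
      have : n = 0 := by simpa using h
      simp [this]
    · intro h
      by_contra h0
      have : n ≠ 0 := by rintro rfl; simp at h0
      exact hx n this h

/-- Independence of a subset of an abelian group. -/
def ZIndep {H : Type*} [AddCommGroup H] (T : Set H) : Prop :=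
  ∀ c : H →₀ ℤ, c ∈ Finsupp.supported ℤ ℤ T → Finsupp.linearCombination ℤ (id : H → H) c = 0 →
    ∀ x, c x • x = 0

theorem exists_max_zindep (H : Type*) [AddCommGroup H] :
    ∃ T : Set H, Maximal ZIndep T := by
  obtain ⟨T, hT⟩ := zorn_subset {T : Set H | ZIndep T} (by
    intro C hC hchain
    rcases C.eq_empty_or_nonempty with rfl | hne
    · refine ⟨∅, ?_, by simp⟩
      intro c hc h x
      have : c = 0 := by simpa using hc
      simp [this]
    refine ⟨⋃₀ C, ?_, fun s hs => Set.subset_sUnion_of_mem hs⟩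
    intro c hc h
    rw [Finsupp.mem_supported] at hc
    obtain ⟨t, ht, hct⟩ := hchain.directedOn.exists_mem_subset_of_finset_subset_biUnion
      (f := fun s => s) hne (s := c.support) (by rwa [Set.sUnion_eq_biUnion] at hc)
    exact hC ht c ((Finsupp.mem_supported _ _).2 hct) h)
  exact ⟨T, hT⟩

theorem essential_of_max {H : Type*} [AddCommGroup H] {T : Set H} (hT : Maximal ZIndep T)
    (z : H) (hz : z ≠ 0) : ∃ n : ℤ, n • z ≠ 0 ∧
      ∃ c ∈ Finsupp.supported ℤ ℤ T, Finsupp.linearCombination ℤ (id : H → H) c = n • z := by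
  classical
  by_cases hzT : z ∈ T
  · refine ⟨1, by simpa, Finsupp.single z 1, ?_, by simp⟩
    exact Finsupp.single_mem_supported ℤ 1 hzT
  · have h1 : ¬ ZIndep (insert z T) := fun h => hzT (hT.2 h (Set.subset_insert _ _) (Set.mem_insert _ _))
    unfold ZIndep at h1
    push Not at h1
    obtain ⟨c, hc, h0, x, hx⟩ := h1
    have hsplit : Finsupp.linearCombination ℤ (id : H → H) c
        = c z • z + Finsupp.linearCombination ℤ (id : H → H) (c.erase z) := by
      conv_lhs => rw [← Finsupp.single_add_erase z c, map_add]
      simp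
    have hsup : c.erase z ∈ Finsupp.supported ℤ ℤ T := by
      rw [Finsupp.mem_supported] at hc ⊢
      intro y hy
      simp only [Finsupp.support_erase, Finset.coe_erase, Set.mem_sdiff, Set.mem_singleton_iff] at hy
      rcases hc hy.1 with h | h
      · exact absurd h hy.2
      · exact h
    rw [h0] at hsplit
    by_cases hcz : c z • z = 0
    · exfalso
      rw [hcz, zero_add] at hsplit
      have := hT.1 _ hsup hsplit.symm x
      by_cases hxz : x = z
      · subst hxz; exact hx hcz
      · rw [Finsupp.erase_ne hxz] at this
        exact hx this
    · refine ⟨c z, hcz, -(c.erase z), neg_mem hsup, ?_⟩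
      rw [map_neg]
      exact (eq_neg_of_add_eq_zero_left hsplit.symm).symm

theorem finsupp_baer (I : Type*) : Module.Baer ℤ (I →₀ BQ) := by
  have h : ∀ {n : ℤ}, n ≠ 0 → Function.Surjective (fun a : I →₀ BQ => n • a) := by
    intro n hn a
    classical
    have h1 : ∀ q : BQ, ∃ r : BQ, n • r = q := by
      rintro ⟨u, v⟩
      obtain ⟨y, rfl⟩ := QuotientAddGroup.mk_surjective v
      refine ⟨(u / n, ((y / n : ℚ) : AddCircle (1 : ℚ))), ?_⟩
      have hn' : (n : ℚ) ≠ 0 := by exact_mod_cast hn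
      refine Prod.ext ?_ ?_
      · simp only [Prod.smul_fst, zsmul_eq_mul]
        field_simp
      · simp only [Prod.smul_snd]
        rw [← AddCircle.coe_zsmul, zsmul_eq_mul, mul_div_cancel₀ _ hn']
    choose r hr using h1
    refine ⟨a.mapRange (fun q => if q = 0 then 0 else r q) (by simp), ?_⟩
    ext1 i
    simp only [Finsupp.smul_apply, Finsupp.mapRange_apply]
    split_ifs with h
    · simp [h]
    · exact hr _
  let _ : DivisibleBy (I →₀ BQ) ℤ := divisibleByOfSMulRightSurj _ _ h
  exact Module.Baer.of_divisible _

theorem exists_embedding (H : Type*) [AddCommGroup H] :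
    ∃ θ : H →+ (H →₀ BQ), Function.Injective θ := by
  obtain ⟨T, hT⟩ := exists_max_zindep H
  choose q hq using fun x : H => exists_bq x
  let Φ : Finsupp.supported ℤ ℤ T →ₗ[ℤ] H :=
    (Finsupp.linearCombination ℤ (id : H → H)).comp (Submodule.subtype _)
  let Ψ : Finsupp.supported ℤ ℤ T →ₗ[ℤ] (H →₀ BQ) :=
    (Finsupp.linearCombination ℤ (fun x : H => Finsupp.single x (q x))).comp (Submodule.subtype _)
  have hΨ : ∀ c x, Ψ c x = (c : H →₀ ℤ) x • q x := by
    intro c x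
    simp only [Ψ, LinearMap.comp_apply, Submodule.subtype_apply, Finsupp.linearCombination_apply,
      Finsupp.sum, Finsupp.finsetSum_apply, Finsupp.smul_apply]
    rw [Finset.sum_eq_single x]
    · simp
    · intro b _ hb
      simp [hb]
    · intro h
      simp [Finsupp.notMem_support_iff.1 h]
  have hker : LinearMap.ker Φ ≤ LinearMap.ker Ψ := by
    intro c hc
    rw [LinearMap.mem_ker] at hc ⊢
    have := hT.1 c c.2 hc
    ext1 x
    rw [hΨ, Finsupp.zero_apply, hq]
    exact this x
  have hker' : ∀ c, Ψ c = 0 → Φ c = 0 := by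
    intro c hc
    simp only [Φ, LinearMap.comp_apply, Submodule.subtype_apply, Finsupp.linearCombination_apply,
      Finsupp.sum]
    refine Finset.sum_eq_zero fun x _ => ?_
    rw [id, ← hq, ← hΨ, hc]; rfl
  let g : LinearMap.range Φ →ₗ[ℤ] (H →₀ BQ) :=
    ((LinearMap.ker Φ).liftQ Ψ hker).comp Φ.quotKerEquivRange.symm.toLinearMap
  obtain ⟨θ, hθ⟩ := (finsupp_baer H).extension_property (LinearMap.range Φ).subtype
    (Submodule.subtype_injective _) g
  have hθΦ : ∀ c, θ (Φ c) = Ψ c := by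
    intro c
    have := LinearMap.congr_fun hθ ⟨Φ c, LinearMap.mem_range_self _ _⟩
    simp only [LinearMap.comp_apply, Submodule.subtype_apply] at this
    rw [this]
    simp only [g, LinearMap.comp_apply, LinearEquiv.coe_coe]
    rw [LinearMap.quotKerEquivRange_symm_apply_image]
    simp
  refine ⟨θ.toAddMonoidHom, ?_⟩
  rw [injective_iff_map_eq_zero]
  intro z hz
  by_contra hz0
  obtain ⟨n, hn, c, hc, hcz⟩ := essential_of_max hT z hz0
  apply hn
  have h1 : Φ ⟨c, hc⟩ = n • z := hcz
  rw [← h1]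
  apply hker'
  rw [← hθΦ, h1, map_zsmul]
  have : θ z = 0 := hz
  rw [this, smul_zero]

section ER

/-- `f` is constant on `n`-element subsets of `Y`. -/
def Homog {X C : Type*} (f : Finset X → C) (n : ℕ) (Y : Set X) : Prop :=
  ∀ s t : Finset X, (s : Set X) ⊆ Y → (t : Set X) ⊆ Y → s.card = n → t.card = n → f s = f t

open Classical in
/-- End-homogeneity of a sequence. -/
def EndHom {X C W : Type*} [LinearOrder W] (f : Finset X → C) (y : W → X) : Prop :=
  ∀ (t : Finset W) (ξ ξ' : W), (∀ η ∈ t, η < ξ) → (∀ η ∈ t, η < ξ') →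
    f (insert (y ξ) (t.image y)) = f (insert (y ξ') (t.image y))

open Classical in
theorem EndHom.step {X C W : Type*} [LinearOrder W] [Inhabited C] {f : Finset X → C} {y : W → X}
    (hy : Function.Injective y) (h : EndHom f y) :
    ∃ g : Finset W → C, ∀ (n : ℕ) (Y : Set W), Homog g n Y → Homog f (n + 1) (y '' Y) := by
  let g : Finset W → C := fun t =>
    if hh : ∃ ξ, ∀ η ∈ t, η < ξ then f (insert (y hh.choose) (t.image y)) else default
  have hg : ∀ (t : Finset W) (ξ : W), (∀ η ∈ t, η < ξ) → f (insert (y ξ) (t.image y)) = g t := by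
    intro t ξ hξ
    have hh : ∃ ξ, ∀ η ∈ t, η < ξ := ⟨ξ, hξ⟩
    simp only [g, dif_pos hh]
    exact h t _ _ hξ hh.choose_spec
  refine ⟨g, fun n Y hY => ?_⟩
  have key : ∀ s : Finset X, (s : Set X) ⊆ y '' Y → s.card = n + 1 →
      ∃ t : Finset W, (t : Set W) ⊆ Y ∧ t.card = n ∧ f s = g t := by
    intro s hs hcard
    obtain ⟨u, huY, rfl⟩ := Finset.subset_set_image_iff.1 hs
    rw [Finset.card_image_of_injective _ hy] at hcard
    have hne : u.Nonempty := by
      rw [← Finset.card_pos]; omega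
    refine ⟨u.erase (u.max' hne), ?_, ?_, ?_⟩
    · exact (Finset.coe_subset.2 (Finset.erase_subset _ _)).trans huY
    · rw [Finset.card_erase_of_mem (Finset.max'_mem _ _), hcard]; rfl
    · rw [← hg _ (u.max' hne), ← Finset.image_insert, Finset.insert_erase (Finset.max'_mem _ _)]
      intro η hη
      exact Finset.lt_max'_of_mem_erase_max' _ _ hη
  intro s s' hs hs' hc hc'
  obtain ⟨t, h1, h2, h3⟩ := key s hs hc
  obtain ⟨t', h1', h2', h3'⟩ := key s' hs' hc'
  rw [h3, h3']
  exact hY t t' h1 h1' h2 h2'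

open Classical in
theorem endHom_nat {X C : Type*} [Infinite X] [Finite C] (f : Finset X → C) :
    ∃ y : ℕ → X, Function.Injective y ∧ EndHom f y := by
  let U := Filter.hyperfilter X
  have h1 : ∀ T : Finset X, ∃ c, ∀ᶠ z in (U : Filter X), f (insert z T) = c := by
    intro T
    rw [← Ultrafilter.eventually_exists_iff]
    exact Filter.Eventually.of_forall fun z => ⟨_, rfl⟩
  choose g hg using h1
  have h2 : ∀ T : Finset X, ∃ z, z ∉ T ∧ ∀ T' ⊆ T, f (insert z T') = g T' := by
    intro T
    have e1 : ∀ᶠ z in (U : Filter X), z ∉ T := by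
      have := Filter.compl_mem_hyperfilter_of_finite (T.finite_toSet)
      exact this
    have e2 : ∀ᶠ z in (U : Filter X), ∀ T' ∈ T.powerset, f (insert z T') = g T' := by
      rw [Filter.eventually_all_finset]
      exact fun T' _ => hg T'
    obtain ⟨z, hz1, hz2⟩ := (e1.and e2).exists
    exact ⟨z, hz1, fun T' hT' => hz2 T' (Finset.mem_powerset.2 hT')⟩
  choose z hz1 hz2 using h2
  -- finite sets of chosen elements
  let T : ℕ → Finset X := fun n => Nat.rec ∅ (fun _ T => insert (z T) T) n
  have hT : ∀ n, T (n + 1) = insert (z (T n)) (T n) := fun n => rfl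
  let y : ℕ → X := fun n => z (T n)
  have hmem : ∀ n m, m < n → y m ∈ T n := by
    intro n
    induction n with
    | zero => intro m hm; omega
    | succ n ih =>
      intro m hm
      rw [hT]
      rcases Nat.lt_succ_iff_lt_or_eq.1 hm with h | rfl
      · exact Finset.mem_insert_of_mem (ih m h)
      · exact Finset.mem_insert_self _ _
  have hlt : ∀ m n, m < n → y m ≠ y n := by
    intro m n hmn h
    exact hz1 (T n) (by rw [← show y n = z (T n) from rfl, ← h]; exact hmem n m hmn)
  refine ⟨y, ?_, ?_⟩
  · intro m n h
    rcases lt_trichotomy m n with h' | h' | h'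
    · exact absurd h (hlt _ _ h')
    · exact h'
    · exact absurd h.symm (hlt _ _ h')
  · have key : ∀ (t : Finset ℕ) (ξ : ℕ), (∀ η ∈ t, η < ξ) →
        f (insert (y ξ) (t.image y)) = g (t.image y) := by
      intro t ξ h
      apply hz2
      intro x hx
      obtain ⟨η, hη, rfl⟩ := Finset.mem_image.1 hx
      exact hmem _ _ (h η hη)
    intro t ξ ξ' h h'
    rw [key t ξ h, key t ξ' h']

theorem infinite_ramsey (n : ℕ) : ∀ {C : Type} [Finite C] [Inhabited C] (f : Finset ℕ → C),
    ∃ Y : Set ℕ, Y.Infinite ∧ Homog f n Y := by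
  induction n with
  | zero =>
    intro C _ _ f
    refine ⟨Set.univ, Set.infinite_univ, ?_⟩
    intro s t _ _ hs ht
    rw [Finset.card_eq_zero.1 hs, Finset.card_eq_zero.1 ht]
  | succ n ih =>
    intro C _ _ f
    obtain ⟨y, hy, hend⟩ := endHom_nat f
    obtain ⟨g, hg⟩ := hend.step hy
    obtain ⟨Y, hY, hH⟩ := ih g
    exact ⟨y '' Y, hY.image hy.injOn, hg n Y hH⟩

universe u
open Cardinal

open Classical in
theorem endHom_card {X : Type u} {l : Cardinal.{u}} (hl : ℵ₀ ≤ l) (hX : (2 : Cardinal) ^ l < #X)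
    (f : Finset X → ℕ) :
    ∃ y : (Order.succ l).ord.ToType → X, Function.Injective y ∧ EndHom f y := by
  let W := (Order.succ l).ord.ToType
  have hne : Nonempty X := by
    rw [← mk_ne_zero_iff]
    exact (lt_of_le_of_lt zero_le hX).ne'
  let Cand : X → (ξ : W) → ((η : W) → η < ξ → X) → Set X := fun x ξ b =>
    {z | (∀ η h, b η h ≠ z) ∧ ∀ t : Finset (Set.Iio ξ),
      f (insert z (t.image fun η => b η.1 η.2)) = f (insert x (t.image fun η => b η.1 η.2))}
  let y : X → W → X := fun x => (wellFounded_lt (α := W)).fix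
    (fun ξ b => Classical.epsilon (· ∈ Cand x ξ b))
  have hy : ∀ x ξ, y x ξ = Classical.epsilon (· ∈ Cand x ξ (fun η _ => y x η)) := by
    intro x ξ
    exact WellFounded.fix_eq _ _ _
  by_cases hcase : ∃ x, ∀ ξ, y x ξ ≠ x
  · obtain ⟨x, hx⟩ := hcase
    have hmem : ∀ ξ, y x ξ ∈ Cand x ξ (fun η _ => y x η) := by
      intro ξ
      rw [hy]
      refine Classical.epsilon_spec (p := (· ∈ Cand x ξ (fun η _ => y x η))) ⟨x, ?_⟩
      exact ⟨fun η _ => hx η, fun _ => rfl⟩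
    refine ⟨y x, ?_, ?_⟩
    · intro m n h
      rcases lt_trichotomy m n with h' | h' | h'
      · exact absurd h ((hmem n).1 m h')
      · exact h'
      · exact absurd h.symm ((hmem m).1 n h')
    · have key : ∀ (t : Finset W) (ξ : W), (∀ η ∈ t, η < ξ) →
          f (insert (y x ξ) (t.image (y x))) = f (insert x (t.image (y x))) := by
        intro t ξ h
        have := (hmem ξ).2 (t.subtype (· ∈ Set.Iio ξ))
        have e : (t.subtype (· ∈ Set.Iio ξ)).image (fun η => y x η.1) = t.image (y x) := by
          ext z
          simp only [Finset.mem_image, Finset.mem_subtype, Subtype.exists]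
          constructor
          · rintro ⟨a, ha, hat, rfl⟩; exact ⟨a, hat, rfl⟩
          · rintro ⟨a, hat, rfl⟩; exact ⟨a, h a hat, hat, rfl⟩
        rw [e] at this
        exact this
      intro t ξ ξ' h h'
      rw [key t ξ h, key t ξ' h']
  · exfalso
    push Not at hcase
    choose ξ hξ using hcase
    let code : X → Σ ξ : W, (Finset (Set.Iio ξ) → ℕ) := fun x =>
      ⟨ξ x, fun t => f (insert x (t.image fun η => y x η.1))⟩
    have hinj : Function.Injective code := by
      intro x x' h
      have h1 : ξ x = ξ x' := congrArg Sigma.fst h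
      have h2 : ∀ t : Finset W, (∀ η ∈ t, η < ξ x) →
          f (insert x (t.image (y x))) = f (insert x' (t.image (y x'))) := by
        intro t ht
        have e : ∀ (x : X) (t : Finset W) (ζ : W), (∀ η ∈ t, η < ζ) →
            (t.subtype (· ∈ Set.Iio ζ)).image (fun η => y x η.1) = t.image (y x) := by
          intro x t ζ h
          ext z
          simp only [Finset.mem_image, Finset.mem_subtype, Subtype.exists]
          constructor
          · rintro ⟨a, ha, hat, rfl⟩; exact ⟨a, hat, rfl⟩
          · rintro ⟨a, hat, rfl⟩; exact ⟨a, h a hat, hat, rfl⟩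
        have h3 : ∀ c : Σ ξ : W, (Finset (Set.Iio ξ) → ℕ), c = code x →
            c.2 (t.subtype (· ∈ Set.Iio c.1)) = f (insert x (t.image (y x))) := by
          rintro c rfl
          simp only [code]
          rw [e x t _ ht]
        have h4 : ∀ c : Σ ξ : W, (Finset (Set.Iio ξ) → ℕ), c = code x' →
            c.2 (t.subtype (· ∈ Set.Iio c.1)) = f (insert x' (t.image (y x'))) := by
          rintro c rfl
          simp only [code]
          rw [e x' t _ (h1 ▸ ht)]
        rw [← h3 _ rfl, ← h4 _ h]
      have h5 : ∀ η, η ≤ ξ x → y x η = y x' η := by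
        intro η
        induction η using (wellFounded_lt (α := W)).induction with
        | _ η ih =>
          intro hη
          rw [hy x η, hy x' η]
          have : Cand x η (fun η _ => y x η) = Cand x' η (fun η _ => y x' η) := by
            have e1 : (fun (ζ : W) (_ : ζ < η) => y x ζ) = fun ζ _ => y x' ζ := by
              funext ζ hζ
              exact ih ζ hζ (hζ.le.trans hη)
            have e2 : ∀ t : Finset (Set.Iio η),
              f (insert x (t.image fun ζ => y x ζ.1)) = f (insert x' (t.image fun ζ => y x' ζ.1)) := by
              intro t
              have := h2 (t.image Subtype.val) (by
                intro ζ hζ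
                obtain ⟨a, _, rfl⟩ := Finset.mem_image.1 hζ
                exact lt_of_lt_of_le a.2 hη)
              rw [Finset.image_image, Finset.image_image] at this
              exact this
            have e3 : ∀ t : Finset (Set.Iio η),
              (t.image fun ζ => y x ζ.1) = (t.image fun ζ => y x' ζ.1) := by
              intro t
              refine Finset.image_congr fun ζ _ => ?_
              exact ih ζ.1 ζ.2 (le_of_lt (lt_of_lt_of_le ζ.2 hη))
            ext z
            simp only [Cand, Set.mem_ofPred_eq]
            refine and_congr ?_ ?_
            · refine forall_congr' fun ζ => forall_congr' fun hζ => ?_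
              rw [ih ζ hζ (hζ.le.trans hη)]
            · refine forall_congr' fun t => ?_
              rw [e2 t, e3 t]
          rw [this]
      rw [← hξ x, ← hξ x', ← h1]
      exact h5 _ le_rfl
    have hle := mk_le_of_injective hinj
    refine absurd (hX.trans_le hle) (not_lt.2 ?_)
    rw [mk_sigma]
    have hb : ∀ ξ : W, #(Finset (Set.Iio ξ) → ℕ) ≤ 2 ^ l := by
      intro ξ
      have h1 : #(Set.Iio ξ) ≤ l := Order.lt_succ_iff.1 (mk_Iio_toType_ord_lt ξ)
      have h2 : #(Finset (Set.Iio ξ)) ≤ l := by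
        by_cases hfin : Finite (Set.Iio ξ)
        · exact (lt_aleph0_of_finite _).le.trans hl
        · have : Infinite (Set.Iio ξ) := not_finite_iff_infinite.1 hfin
          rw [mk_finset_of_infinite]
          exact h1
      rw [mk_arrow]
      simp only [lift_uzero, mk_nat, lift_aleph0]
      calc (ℵ₀ : Cardinal.{u}) ^ #(Finset (Set.Iio ξ)) ≤ l ^ l :=
            (power_le_power_right hl).trans
              (power_le_power_left (aleph0_pos.trans_le hl).ne' h2)
        _ = 2 ^ l := power_self_eq hl
    calc Cardinal.sum (fun ξ : W => #(Finset (Set.Iio ξ) → ℕ))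
        ≤ Cardinal.sum (fun _ : W => (2 : Cardinal.{u}) ^ l) := sum_le_sum _ _ hb
      _ = #W * 2 ^ l := by simp
      _ ≤ 2 ^ l * 2 ^ l := by
          gcongr
          rw [mk_ord_toType]
          exact Order.succ_le_of_lt (cantor l)
      _ = 2 ^ l := mul_eq_self (hl.trans (cantor l).le)

theorem er_step {n : ℕ} {l : Cardinal.{u}} (hl : ℵ₀ ≤ l)
    (ih : ∀ {X : Type u}, l < #X → ∀ f : Finset X → ℕ, ∃ Y : Set X, Y.Infinite ∧ Homog f n Y)
    {X : Type u} (hX : (2 : Cardinal) ^ l < #X) (f : Finset X → ℕ) :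
    ∃ Y : Set X, Y.Infinite ∧ Homog f (n + 1) Y := by
  obtain ⟨y, hy, hend⟩ := endHom_card hl hX f
  obtain ⟨g, hg⟩ := hend.step hy
  obtain ⟨Y, hY, hH⟩ := ih (X := (Order.succ l).ord.ToType)
    (by rw [mk_ord_toType]; exact Order.lt_succ l) g
  exact ⟨y '' Y, hY.image hy.injOn, hg n Y hH⟩

theorem er_one {X : Type u} (hX : ℵ₀ < #X) (f : Finset X → ℕ) :
    ∃ Y : Set X, Y.Infinite ∧ Homog f 1 Y := by
  have : Infinite X := infinite_iff.2 hX.le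
  have : ∃ n, ((fun x : X => f {x}) ⁻¹' {n}).Infinite := by
    by_contra h
    push Not at h
    have h1 : (Set.univ : Set X).Countable := by
      have : (Set.univ : Set X) = ⋃ n, (fun x : X => f {x}) ⁻¹' {n} := by
        ext x; simp
      rw [this]
      exact Set.countable_iUnion fun n => (h n).countable
    have h2 : Countable X := Set.countable_univ_iff.1 h1
    exact absurd hX (not_lt.2 (mk_le_aleph0))
  obtain ⟨n, hn⟩ := this
  refine ⟨_, hn, ?_⟩
  intro s t hs ht h1 h2
  obtain ⟨a, rfl⟩ := Finset.card_eq_one.1 h1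
  obtain ⟨b, rfl⟩ := Finset.card_eq_one.1 h2
  have ha : f {a} = n := by simpa using hs
  have hb : f {b} = n := by simpa using ht
  rw [ha, hb]

theorem erdos_rado_four {X : Type u}
    (hX : (2 : Cardinal.{u}) ^ ((2 : Cardinal.{u}) ^ Cardinal.continuum.{u}) < #X)
    (f : Finset X → ℕ) : ∃ Y : Set X, Y.Infinite ∧ Homog f 4 Y := by
  refine er_step (l := 2 ^ continuum) (aleph0_le_continuum.trans (cantor _).le) ?_ hX f
  intro X hX f
  refine er_step (l := continuum) aleph0_le_continuum ?_ hX f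
  intro X hX f
  rw [← two_power_aleph0] at hX
  exact er_step (l := ℵ₀) le_rfl er_one hX f

end ER

/-- Order-indiscernibility of a labelling of increasing quadruples. -/
def Indisc {n : ℕ} {I : Type*} (i : (Fin 4 → ℕ) → Fin n → I) : Prop :=
  ∀ σ τ : Fin 4 → ℕ, StrictMono σ → StrictMono τ → ∀ φ : ℕ → ℕ, StrictMono φ →
    ∀ j k, i (φ ∘ σ) j = i (φ ∘ τ) k ↔ i σ j = i τ k

open Classical in
theorem exists_indisc {n : ℕ} {I : Type*} (D : (Fin 4 → ℕ) → Fin n → I) :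
    ∃ M : ℕ → ℕ, StrictMono M ∧ Indisc (fun s => D (M ∘ s)) := by
  let c : Finset ℕ → ((Fin 4 → Fin 8) × (Fin 4 → Fin 8) × Fin n × Fin n → Prop) := fun w =>
    if h : w.card = 8 then fun x =>
      D (w.orderEmbOfFin h ∘ x.1) x.2.2.1 = D (w.orderEmbOfFin h ∘ x.2.1) x.2.2.2
    else fun _ => True
  obtain ⟨Y, hY, hH⟩ := infinite_ramsey 8 c
  have : Infinite Y := hY.to_subtype
  let M := Nat.orderEmbeddingOfSet Y
  have hM : StrictMono M := M.strictMono
  have hMY : ∀ m, M m ∈ Y := fun m => by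
    have := Set.mem_range_self (f := Nat.orderEmbeddingOfSet Y) m
    rwa [Nat.orderEmbeddingOfSet_range] at this
  have key : ∀ w : Fin 8 → ℕ, StrictMono w → ∀ x,
      c (Finset.univ.image (M ∘ w)) x ↔ D (M ∘ w ∘ x.1) x.2.2.1 = D (M ∘ w ∘ x.2.1) x.2.2.2 := by
    intro w hw x
    have hcard : (Finset.univ.image (M ∘ w)).card = 8 := by
      rw [Finset.card_image_of_injective _ (hM.comp hw).injective]
      simp
    have he : (M ∘ w) = (Finset.univ.image (M ∘ w)).orderEmbOfFin hcard :=
      Finset.orderEmbOfFin_unique hcard (fun x => Finset.mem_image_of_mem _ (Finset.mem_univ x))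
        (hM.comp hw)
    simp only [c, dif_pos hcard, ← he]
    rfl
  have key2 : ∀ w w' : Fin 8 → ℕ, StrictMono w → StrictMono w' → ∀ x :
      (Fin 4 → Fin 8) × (Fin 4 → Fin 8) × Fin n × Fin n,
      D (M ∘ w ∘ x.1) x.2.2.1 = D (M ∘ w ∘ x.2.1) x.2.2.2 ↔
      D (M ∘ w' ∘ x.1) x.2.2.1 = D (M ∘ w' ∘ x.2.1) x.2.2.2 := by
    intro w w' hw hw' x
    rw [← key w hw, ← key w' hw']
    have hc : ∀ w : Fin 8 → ℕ, StrictMono w → (Finset.univ.image (M ∘ w)).card = 8 := by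
      intro w hw
      rw [Finset.card_image_of_injective _ (hM.comp hw).injective]
      simp
    have hs : ∀ w : Fin 8 → ℕ, ((Finset.univ.image (M ∘ w) : Finset ℕ) : Set ℕ) ⊆ Y := by
      intro w y hy
      simp only [Finset.coe_image, Finset.coe_univ, Set.image_univ, Set.mem_range] at hy
      obtain ⟨m, rfl⟩ := hy
      exact hMY _
    rw [hH _ _ (hs w) (hs w') (hc w hw) (hc w' hw')]
  refine ⟨M, hM, ?_⟩
  intro σ τ hσ hτ φ hφ j k
  have hU : (Finset.univ.image σ ∪ Finset.univ.image τ).card ≤ 8 := by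
    refine (Finset.card_union_le _ _).trans ?_
    have h1 := Finset.card_image_le (s := (Finset.univ : Finset (Fin 4))) (f := σ)
    have h2 := Finset.card_image_le (s := (Finset.univ : Finset (Fin 4))) (f := τ)
    simp at h1 h2
    omega
  obtain ⟨U, hUsub, hUcard⟩ := Infinite.exists_superset_card_eq _ 8 hU
  let w := U.orderEmbOfFin hUcard
  have hr : ∀ x ∈ U, ∃ m, w m = x := by
    intro x hx
    have := Finset.range_orderEmbOfFin U hUcard
    have hx' : x ∈ (U : Set ℕ) := hx
    rw [← this] at hx'
    exact hx'
  have h1 : ∀ q, ∃ m, w m = σ q := fun q => hr _ (hUsub (by simp))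
  have h2 : ∀ q, ∃ m, w m = τ q := fun q => hr _ (hUsub (by simp))
  choose σ' hσ' using h1
  choose τ' hτ' using h2
  have e1 : σ = w ∘ σ' := funext fun q => (hσ' q).symm
  have e2 : τ = w ∘ τ' := funext fun q => (hτ' q).symm
  have := key2 (φ ∘ w) w (hφ.comp w.strictMono) w.strictMono ⟨σ', τ', j, k⟩
  rw [e1, e2]
  exact this

section core
variable {n : ℕ} {I : Type*} {i : (Fin 4 → ℕ) → Fin n → I}

/-- The position `p` is essential for the label `j`. -/
def EssPos (i : (Fin 4 → ℕ) → Fin n → I) (j : Fin n) (p : Fin 4) : Prop :=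
  i (fun q => (p.succ.succAbove q : ℕ)) j ≠ i (fun q => (p.castSucc.succAbove q : ℕ)) j

theorem essPos_iff (hI : Indisc i) (j : Fin n) (p : Fin 4) (w : Fin 5 → ℕ) (hw : StrictMono w) :
    i (w ∘ p.succ.succAbove) j = i (w ∘ p.castSucc.succAbove) j ↔ ¬ EssPos i j p := by
  let φ : ℕ → ℕ := fun m => if h : m < 5 then w ⟨m, h⟩ else w 4 + m
  have hφ : StrictMono φ := by
    intro a b hab
    simp only [φ]
    split_ifs with h1 h2 h2
    · exact hw hab
    · have : w ⟨a, h1⟩ ≤ w 4 := hw.monotone (Fin.le_last _)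
      omega
    · omega
    · omega
  have hsm : ∀ r : Fin 5, StrictMono (fun q : Fin 4 => (r.succAbove q : ℕ)) := by
    intro r a b hab
    exact Fin.strictMono_succAbove r hab
  have := hI _ _ (hsm p.succ) (hsm p.castSucc) φ hφ j j
  unfold EssPos
  rw [not_not, ← this]
  have e : ∀ r : Fin 5, φ ∘ (fun q : Fin 4 => (r.succAbove q : ℕ)) = w ∘ r.succAbove := by
    intro r
    funext q
    simp [φ]
  rw [e, e]

theorem single_change (hI : Indisc i) (j : Fin n) (p : Fin 4) (s : Fin 4 → ℕ) (hs : StrictMono s)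
    (x : ℕ) (hx : s p < x) (hs' : StrictMono (Function.update s p x)) :
    i s j = i (Function.update s p x) j ↔ ¬ EssPos i j p := by
  let w : Fin 5 → ℕ := Fin.insertNth (α := fun _ => ℕ) p.succ x s
  have e1 : w ∘ p.succ.succAbove = s := by
    funext q
    simp [w]
  have h01 := hs' (show (0 : Fin 4) < 1 by decide)
  have h12 := hs' (show (1 : Fin 4) < 2 by decide)
  have h23 := hs' (show (2 : Fin 4) < 3 by decide)
  have g01 := hs (show (0 : Fin 4) < 1 by decide)
  have g12 := hs (show (1 : Fin 4) < 2 by decide)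
  have g23 := hs (show (2 : Fin 4) < 3 by decide)
  have w0 : w = fun m : Fin 5 => if h : m.1 ≤ p.1 then s ⟨m.1, by omega⟩ else
      if m.1 = p.1 + 1 then x else s ⟨m.1 - 1, by omega⟩ := by
    funext m
    refine Fin.succAboveCases p.succ ?_ ?_ m
    · simp [w]
    · intro q
      simp only [w, Fin.insertNth_apply_succAbove]
      by_cases hq : q ≤ p
      · have : p.succ.succAbove q = q.castSucc := Fin.succAbove_of_castSucc_lt _ _ (by
          rw [Fin.lt_def]; simp; omega)
        rw [this]
        have : q.1 ≤ p.1 := hq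
        simp [this]
      · have : p.succ.succAbove q = q.succ := Fin.succAbove_of_le_castSucc _ _ (by
          rw [Fin.le_def]; simp; omega)
        rw [this]
        have h1 : ¬ q.1 + 1 ≤ p.1 := by rw [Fin.le_def] at hq; omega
        have h2 : ¬ q.1 = p.1 := by rw [Fin.le_def] at hq; omega
        simp [h1, h2]
  have e2 : w ∘ p.castSucc.succAbove = Function.update s p x := by
    rw [w0]
    funext q
    fin_cases p <;> fin_cases q <;> rfl
  have hw : StrictMono w := by
    rw [Fin.strictMono_iff_lt_succ, w0]
    intro m
    fin_cases p <;> fin_cases m <;> simp_all [Function.update]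
  have := essPos_iff hI j p w hw
  rwa [e1, e2] at this

theorem strictMono_max {s t : Fin 4 → ℕ} (hs : StrictMono s) (ht : StrictMono t) :
    StrictMono (fun q => max (s q) (t q)) := by
  intro a b hab
  have := hs hab
  have := ht hab
  simp only
  omega

theorem agree_le (hI : Indisc i) (j : Fin n) (s t : Fin 4 → ℕ) (hs : StrictMono s)
    (ht : StrictMono t) (hle : ∀ q, s q ≤ t q) (h : ∀ p, EssPos i j p → s p = t p) :
    i s j = i t j := by
  let r : ℕ → Fin 4 → ℕ := fun m q => if m ≤ q.1 then t q else s q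
  have hr : ∀ m, StrictMono (r m) := by
    intro m a b hab
    have h1 := hs hab
    have h2 := ht hab
    have h3 := hle a
    have h4 := hle b
    have hab' : a.1 < b.1 := hab
    simp only [r]
    split_ifs <;> omega
  have hstep : ∀ m : Fin 4, i (r (m.1 + 1)) j = i (r m.1) j := by
    intro m
    have e : r m.1 = Function.update (r (m.1 + 1)) m (t m) := by
      funext q
      by_cases hq : q = m
      · subst hq; simp [r]
      · rw [Function.update_of_ne hq]
        have : q.1 ≠ m.1 := fun h => hq (Fin.ext h)
        simp only [r]
        split_ifs <;> first | rfl | omega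
    have hval : r (m.1 + 1) m = s m := by simp [r]
    rcases (hle m).eq_or_lt with heq | hlt
    · rw [e, ← heq, ← hval, Function.update_eq_self]
    · have hess : ¬ EssPos i j m := fun hE => hlt.ne (h m hE)
      rw [e]
      refine (single_change hI j m _ (hr _) (t m) (by rw [hval]; exact hlt) ?_).2 hess
      rw [← e]
      exact hr _
  have e4 : r 4 = s := by
    funext q
    have : ¬ 4 ≤ q.1 := by omega
    simp only [r, if_neg this]
  have e0 : r 0 = t := by
    funext q
    simp [r]
  rw [← e4, ← e0]
  exact (hstep 3).trans ((hstep 2).trans ((hstep 1).trans (hstep 0)))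

theorem agree (hI : Indisc i) (j : Fin n) (s t : Fin 4 → ℕ) (hs : StrictMono s)
    (ht : StrictMono t) (h : ∀ p, EssPos i j p → s p = t p) : i s j = i t j := by
  have hm := strictMono_max hs ht
  rw [agree_le hI j s _ hs hm (fun q => le_max_left _ _) (fun p hp => by simp [h p hp]),
    agree_le hI j t _ ht hm (fun q => le_max_right _ _) (fun p hp => by simp [h p hp])]

theorem ess_mem (hI : Indisc i) (j k : Fin n) (s t : Fin 4 → ℕ) (hs : StrictMono s)
    (ht : StrictMono t) (h : i t j = i s k) (p : Fin 4) (hp : EssPos i j p) :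
    ∃ q, s q = t p := by
  by_contra hcon
  push Not at hcon
  have hφ1 : StrictMono (fun m : ℕ => 2 * m) := by
    intro a b hab
    simp only
    omega
  have hφ2 : StrictMono (fun m : ℕ => if m = t p then 2 * m + 1 else 2 * m) := by
    intro a b hab
    simp only
    split_ifs <;> omega
  have h1 := (hI t s ht hs _ hφ1 j k).2 h
  have h2 := (hI t s ht hs _ hφ2 j k).2 h
  have e1 : (fun m : ℕ => if m = t p then 2 * m + 1 else 2 * m) ∘ s = (fun m : ℕ => 2 * m) ∘ s := by
    funext q
    simp [hcon q]
  have e2 : (fun m : ℕ => if m = t p then 2 * m + 1 else 2 * m) ∘ t =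
      Function.update ((fun m : ℕ => 2 * m) ∘ t) p (2 * t p + 1) := by
    funext q
    by_cases hq : q = p
    · subst hq; simp
    · rw [Function.update_of_ne hq]
      have : t q ≠ t p := fun h => hq (ht.injective h)
      simp [this]
  rw [e1, ← h1] at h2
  have hsm := hφ2.comp ht
  rw [e2] at h2 hsm
  exact (single_change hI j p _ (hφ1.comp ht) _ (by simp) hsm).1 h2.symm hp

end core

/-- Characters of `BQ` with values in `ℝ/ℤ` separate points. -/
theorem exists_char (d : BQ) (hd : d ≠ 0) : ∃ ψ : BQ →+ AddCircle (1 : ℝ), ψ d ≠ 0 := by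
  obtain ⟨c, hc⟩ := CharacterModule.exists_character_apply_ne_zero_of_ne_zero hd
  let ι : AddCircle (1 : ℚ) →+ AddCircle (1 : ℝ) :=
    QuotientAddGroup.map (AddSubgroup.zmultiples (1 : ℚ)) (AddSubgroup.zmultiples (1 : ℝ))
      (Rat.castHom ℝ).toAddMonoidHom (by
        rw [AddSubgroup.zmultiples_le]
        simp [AddSubgroup.mem_comap, AddSubgroup.mem_zmultiples])
  have hι : Function.Injective ι := by
    rw [injective_iff_map_eq_zero]
    intro x hx
    obtain ⟨y, rfl⟩ := QuotientAddGroup.mk_surjective x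
    have h1 : (((y : ℝ)) : AddCircle (1 : ℝ)) = 0 := hx
    rw [AddCircle.coe_eq_zero_iff] at h1
    obtain ⟨m, hm⟩ := h1
    have h2 : ((y : ℚ) : AddCircle (1 : ℚ)) = 0 := by
      rw [AddCircle.coe_eq_zero_iff]
      refine ⟨m, ?_⟩
      simp only [zsmul_eq_mul, mul_one] at hm ⊢
      exact_mod_cast hm
    exact h2
  let c' : BQ →+ AddCircle (1 : ℚ) := c
  refine ⟨ι.comp c', ?_⟩
  intro h
  apply hc
  exact hι (by rw [map_zero]; exact h)

open Classical in
/-- The character applying `ψ` on the coordinates in `J`. -/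
noncomputable def coordChar {I : Type*} (J : Set I) (ψ : BQ →+ AddCircle (1 : ℝ)) :
    (I →₀ BQ) →+ AddCircle (1 : ℝ) :=
  Finsupp.liftAddHom (fun x => if x ∈ J then ψ else 0)

open Classical in
theorem coordChar_single {I : Type*} (J : Set I) (ψ : BQ →+ AddCircle (1 : ℝ)) (x : I) (d : BQ) :
    coordChar J ψ (Finsupp.single x d) = if x ∈ J then ψ d else 0 := by
  unfold coordChar
  rw [Finsupp.liftAddHom_apply_single]
  split_ifs <;> rfl

theorem pick_four (X : Fin 4 → Set ℕ) (hX : ∀ p, (X p).Infinite) :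
    ∃ s : Fin 4 → ℕ, StrictMono s ∧ ∀ p, s p ∈ X p := by
  obtain ⟨a, ha, _⟩ := (hX 0).exists_gt 0
  obtain ⟨b, hb, hab⟩ := (hX 1).exists_gt a
  obtain ⟨c, hc, hbc⟩ := (hX 2).exists_gt b
  obtain ⟨d, hd, hcd⟩ := (hX 3).exists_gt c
  refine ⟨![a, b, c, d], ?_, ?_⟩
  · rw [Fin.strictMono_iff_lt_succ]
    intro m
    fin_cases m <;> simpa
  · intro p
    fin_cases p <;> simpa

/-- Continuity at zero, in combinatorial form. -/
def ContZero {I : Type*} (F : (Fin 4 → ℕ) → (I →₀ BQ)) : Prop :=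
  ∀ (χ : (I →₀ BQ) →+ AddCircle (1 : ℝ)) (z : AddCircle (1 : ℝ)), z ≠ 0 →
    ∃ (C : Type) (_ : Finite C) (c : ℕ → C), ∀ s : Fin 4 → ℕ, StrictMono s →
      ∀ p q u v : Fin 4, [p, q, u, v].Nodup → c (s p) = c (s q) → c (s u) = c (s v) →
        χ (F s) ≠ z

theorem exists_infinite_color {C : Type} [Finite C] (c : ℕ → C) (X : Set ℕ) (hX : X.Infinite) :
    ∃ r, {x | x ∈ X ∧ c x = r}.Infinite := by
  by_contra h
  push Not at h
  apply hX
  have : X = ⋃ r, {x | x ∈ X ∧ c x = r} := by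
    ext x; simp
  rw [this]
  exact Set.finite_iUnion h

theorem rows {C : Type} [Finite C] (c : ℕ → C) :
    ∃ (R : ℕ → ℕ) (r : C), Function.Injective R ∧
      ∀ m, {x | (Nat.unpair x).1 = R m ∧ c x = r}.Infinite := by
  have h1 : ∀ m, ∃ r, {x | x ∈ {x | (Nat.unpair x).1 = m} ∧ c x = r}.Infinite := by
    intro m
    apply exists_infinite_color
    refine Set.infinite_of_injective_forall_mem (f := fun y => Nat.pair m y) ?_ ?_
    · intro a b h
      exact (Nat.pair_eq_pair.1 h).2
    · intro y
      simp
  choose col hcol using h1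
  obtain ⟨r, hr⟩ := exists_infinite_color col Set.univ Set.infinite_univ
  refine ⟨Nat.nth (fun m => m ∈ {x | x ∈ Set.univ ∧ col x = r}), r,
    Nat.nth_injective hr, fun m => ?_⟩
  have := Nat.nth_mem_of_infinite hr m
  have h2 : col (Nat.nth (fun m => m ∈ {x | x ∈ Set.univ ∧ col x = r}) m) = r := this.2
  have h3 := hcol (Nat.nth (fun m => m ∈ {x | x ∈ Set.univ ∧ col x = r}) m)
  rw [h2] at h3
  exact h3

theorem strictMonoOn_self (A : Set (Fin 4)) (σ : Fin 4 → Fin 4) (hσ : StrictMonoOn σ A)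
    (hA : Set.MapsTo σ A A) : ∀ p ∈ A, σ p = p := by
  let g : A → A := hA.restrict
  have hg : StrictMono g := fun a b hab => hσ a.2 b.2 hab
  have hsurj : Function.Surjective g := Finite.surjective_of_injective hg.injective
  let e : A ≃o A := hg.orderIsoOfSurjective g hsurj
  have he : e = OrderIso.refl A := Subsingleton.elim _ _
  intro p hp
  have : e ⟨p, hp⟩ = ⟨p, hp⟩ := by rw [he]; rfl
  exact congrArg Subtype.val this

theorem exists_compl : ∀ p q : Fin 4, p ≠ q → ∃ u v : Fin 4, [p, q, u, v].Nodup := by decide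

set_option maxRecDepth 10000 in
theorem univ_of_nodup : ∀ p q u v : Fin 4, [p, q, u, v].Nodup →
    (Finset.univ : Finset (Fin 4)) = {p, q, u, v} := by decide

section core2
variable {n : ℕ} {I : Type*} {i : (Fin 4 → ℕ) → Fin n → I} {d : Fin n → BQ}

open Classical in
theorem ess_unique (hI : Indisc i) (hinj : ∀ s, StrictMono s → Function.Injective (i s))
    (hd : ∀ j, d j ≠ 0) (hF : ContZero (fun s => ∑ j, Finsupp.single (i s j) (d j))) (j : Fin n) :
    ∃! p, EssPos i j p := by
  by_contra hcon
  let A : Set (Fin 4) := {p | EssPos i j p}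
  -- every essential position has a partner
  have hpart : ∀ p ∈ A, ∃ p' ∈ A, p' ≠ p := by
    intro p hp
    by_contra h
    push Not at h
    exact hcon ⟨p, hp, h⟩
  let G : (Fin 4 → ℕ) → Prop := fun t => ∀ p ∈ A, ∀ q ∈ A, (Nat.unpair (t p)).1 = (Nat.unpair (t q)).1
  let J : Set I := {x | ∃ t, StrictMono t ∧ G t ∧ i t j = x}
  obtain ⟨ψ, hψ⟩ := exists_char (d j) (hd j)
  obtain ⟨C, hC, c, hc⟩ := hF (coordChar J ψ) (ψ (d j)) hψ
  obtain ⟨R, r, hR, hinf⟩ := rows c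
  let ρ : Fin 4 → ℕ := fun p => if p ∈ A then R 0 else R (p.1 + 1)
  obtain ⟨s, hs, hsX⟩ := pick_four (fun p => {x | (Nat.unpair x).1 = ρ p ∧ c x = r})
    (fun p => by
      simp only [ρ]
      split_ifs
      · exact hinf 0
      · exact hinf _)
  have hrow : ∀ p q, p ≠ q → (Nat.unpair (s p)).1 = (Nat.unpair (s q)).1 → p ∈ A := by
    intro p q hpq h
    rw [(hsX p).1, (hsX q).1] at h
    by_contra hp
    simp only [ρ, if_neg hp] at h
    split_ifs at h
    · have := hR h; omega
    · have := hR h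
      exact hpq (Fin.ext (by omega))
  have hsG : G s := by
    intro p hp q hq
    rw [(hsX p).1, (hsX q).1]
    simp [ρ, hp, hq]
  refine hc s hs 0 1 2 3 (by decide) ((hsX 0).2.trans (hsX 1).2.symm)
    ((hsX 2).2.trans (hsX 3).2.symm) ?_
  rw [map_sum]
  rw [Finset.sum_eq_single j]
  · rw [coordChar_single, if_pos ⟨s, hs, hsG, rfl⟩]
  · intro k _ hkj
    rw [coordChar_single, if_neg]
    rintro ⟨t, ht, htG, hts⟩
    apply hkj
    apply hinj s hs
    rw [← hts]
    have hmem : ∀ p, ∃ q, p ∈ A → s q = t p := by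
      intro p
      by_cases hp : p ∈ A
      · obtain ⟨q, hq⟩ := ess_mem hI j k s t hs ht hts p hp
        exact ⟨q, fun _ => hq⟩
      · exact ⟨0, fun h => absurd h hp⟩
    choose σ hσ using hmem
    have hmono : StrictMonoOn σ A := by
      intro p hp q hq hpq
      rw [← hs.lt_iff_lt, hσ p hp, hσ q hq]
      exact ht hpq
    have hmaps : Set.MapsTo σ A A := by
      intro p hp
      obtain ⟨p', hp', hne⟩ := hpart p hp
      refine hrow (σ p) (σ p') ?_ ?_
      · intro h
        exact hne (hmono.injOn hp' hp h.symm)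
      · rw [hσ p hp, hσ p' hp']
        exact htG p hp p' hp'
    apply agree hI j t s ht hs
    intro p hp
    rw [← hσ p hp, strictMonoOn_self A σ hmono hmaps p hp]
  · intro h
    exact absurd (Finset.mem_univ j) h

open Classical in
theorem core_linear (hI : Indisc i) (hinj : ∀ s, StrictMono s → Function.Injective (i s))
    (hd : ∀ j, d j ≠ 0) (hF : ContZero (fun s => ∑ j, Finsupp.single (i s j) (d j))) :
    ∃ v : ℕ → (I →₀ BQ), (∀ x, v x + v x = 0) ∧
      ∀ s, StrictMono s → ∑ j, Finsupp.single (i (fun q => 4 * s q + 4) j) (d j) = ∑ q, v (s q) := by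
  choose P hP hPu using fun j => (ess_unique hI hinj hd hF j)
  let b : Fin n → ℕ → Fin 4 → ℕ := fun j x q => 4 * x + 4 + q.1 - (P j).1
  have hb : ∀ j x, StrictMono (b j x) := by
    intro j x a c hac
    have : a.1 < c.1 := hac
    simp only [b]
    omega
  have hbP : ∀ j x, b j x (P j) = 4 * x + 4 := by
    intro j x
    simp only [b]
    omega
  let ι : Fin n → ℕ → I := fun j x => i (b j x) j
  have hι : ∀ j s, StrictMono s → i (fun q => 4 * s q + 4) j = ι j (s (P j)) := by
    intro j s hs
    refine agree hI j _ _ (fun a c hac => ?_) (hb _ _) ?_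
    · have := hs hac
      omega
    · intro p hp
      rw [hPu j p hp, hbP]
  have hι_inj : ∀ j k x x', ι j x = ι k x' → x = x' := by
    intro j k x x' h
    obtain ⟨q, hq⟩ := ess_mem hI j k _ _ (hb k x') (hb j x) h (P j) (hP j)
    rw [hbP] at hq
    simp only [b] at hq
    omega
  have hι_ind : ∀ j k x, ι j x = ι k x ↔ ι j 0 = ι k 0 := by
    intro j k x
    have hφ : StrictMono (fun m : ℕ => m + 4 * x) := by
      intro a c hac
      simp only
      omega
    have e : ∀ j, b j x = (fun m : ℕ => m + 4 * x) ∘ b j 0 := by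
      intro j
      funext q
      simp only [b, Function.comp]
      omega
    simp only [ι]
    rw [e j, e k]
    exact hI _ _ (hb j 0) (hb k 0) _ hφ j k
  let g : Fin 4 → ℕ → (I →₀ BQ) := fun p x =>
    ∑ j ∈ Finset.univ.filter (fun j => P j = p), Finsupp.single (ι j x) (d j)
  have hFg : ∀ s, StrictMono s →
      ∑ j, Finsupp.single (i (fun q => 4 * s q + 4) j) (d j) = ∑ p, g p (s p) := by
    intro s hs
    simp only [g]
    rw [← Finset.sum_fiberwise Finset.univ P]
    refine Finset.sum_congr rfl fun p _ => Finset.sum_congr rfl fun j hj => ?_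
    rw [hι j s hs, (Finset.mem_filter.1 hj).2]
  let m : Fin n → Fin 4 → BQ := fun j p =>
    ∑ k ∈ Finset.univ.filter (fun k => P k = p), if ι k 0 = ι j 0 then d k else 0
  have hgm : ∀ j p x, g p x (ι j x) = m j p := by
    intro j p x
    simp only [g, m, Finsupp.finsetSum_apply]
    refine Finset.sum_congr rfl fun k _ => ?_
    rw [Finsupp.single_apply, ← hι_ind k j x]
  have hm : ∀ j p q, p ≠ q → m j p + m j q = 0 := by
    intro j p q hpq
    by_contra hne
    obtain ⟨ψ, hψ⟩ := exists_char _ hne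
    let J : Set I := {y | ∃ x, ι j (2 * x) = y}
    have hchar_even : ∀ r x, coordChar J ψ (g r (2 * x)) = ψ (m j r) := by
      intro r x
      simp only [g, m, map_sum]
      refine Finset.sum_congr rfl fun k _ => ?_
      rw [coordChar_single, ← hι_ind k j (2 * x)]
      by_cases h : ι k (2 * x) = ι j (2 * x)
      · rw [if_pos h, if_pos ⟨x, h.symm⟩]
      · rw [if_neg h, if_neg, map_zero]
        rintro ⟨x', hx'⟩
        have := hι_inj _ _ _ _ hx'
        rw [this] at hx'
        exact h hx'.symm
    have hchar_odd : ∀ r x, coordChar J ψ (g r (2 * x + 1)) = 0 := by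
      intro r x
      simp only [g, map_sum]
      refine Finset.sum_eq_zero fun k _ => ?_
      rw [coordChar_single, if_neg]
      rintro ⟨x', hx'⟩
      have := hι_inj _ _ _ _ hx'
      omega
    obtain ⟨C, hC, c, hc⟩ := hF (coordChar J ψ) _ hψ
    obtain ⟨r1, hr1⟩ := exists_infinite_color (fun x => c (4 * x + 4)) {x | ∃ y, x = 2 * y}
      (Set.infinite_of_injective_forall_mem (f := fun y => 2 * y)
        (fun a b h => by simpa using h) (fun y => ⟨y, rfl⟩))
    obtain ⟨r2, hr2⟩ := exists_infinite_color (fun x => c (4 * x + 4)) {x | ∃ y, x = 2 * y + 1}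
      (Set.infinite_of_injective_forall_mem (f := fun y => 2 * y + 1)
        (fun a b h => by simpa using h) (fun y => ⟨y, rfl⟩))
    obtain ⟨u, v, huv⟩ : ∃ u v : Fin 4, [p, q, u, v].Nodup := by
      exact exists_compl p q hpq
    obtain ⟨s, hs, hsX⟩ := pick_four (fun a => if a = p ∨ a = q then
      {x | x ∈ {x | ∃ y, x = 2 * y} ∧ c (4 * x + 4) = r1} else
      {x | x ∈ {x | ∃ y, x = 2 * y + 1} ∧ c (4 * x + 4) = r2}) (fun a => by
        split_ifs
        · exact hr1
        · exact hr2)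
    have hu : ¬ (u = p ∨ u = q) := by
      simp only [List.nodup_cons, List.mem_cons] at huv
      tauto
    have hv : ¬ (v = p ∨ v = q) := by
      simp only [List.nodup_cons, List.mem_cons] at huv
      tauto
    have hsp := hsX p
    have hsq := hsX q
    have hsu := hsX u
    have hsv := hsX v
    rw [if_pos (Or.inl rfl)] at hsp
    rw [if_pos (Or.inr rfl)] at hsq
    rw [if_neg hu] at hsu
    rw [if_neg hv] at hsv
    have hs4 : StrictMono (fun a => 4 * s a + 4) := by
      intro a c hac
      have := hs hac
      simp only
      omega
    refine hc (fun a => 4 * s a + 4) hs4 p q u v huv (hsp.2.trans hsq.2.symm)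
      (hsu.2.trans hsv.2.symm) ?_
    simp only
    rw [hFg s hs, map_sum]
    have huniv : (Finset.univ : Finset (Fin 4)) = {p, q, u, v} :=
      univ_of_nodup p q u v huv
    obtain ⟨yp, hyp⟩ := hsp.1
    obtain ⟨yq, hyq⟩ := hsq.1
    obtain ⟨yu, hyu⟩ := hsu.1
    obtain ⟨yv, hyv⟩ := hsv.1
    simp only [List.nodup_cons, List.mem_cons, List.not_mem_nil, or_false, not_or] at huv
    rw [huniv, Finset.sum_insert (by simp; tauto), Finset.sum_insert (by simp; tauto),
      Finset.sum_insert (by simp; tauto), Finset.sum_singleton, hyp, hyq, hyu, hyv, hchar_even,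
      hchar_even, hchar_odd, hchar_odd, map_add]
    simp
  have hg : ∀ p q x, p ≠ q → g p x + g q x = 0 := by
    intro p q x hpq
    ext1 y
    rw [Finsupp.add_apply, Finsupp.zero_apply]
    by_cases hy : ∃ j, ι j x = y
    · obtain ⟨j, rfl⟩ := hy
      rw [hgm, hgm, hm j p q hpq]
    · push Not at hy
      have : ∀ p, g p x y = 0 := by
        intro p
        simp only [g, Finsupp.finsetSum_apply]
        refine Finset.sum_eq_zero fun k _ => ?_
        rw [Finsupp.single_apply, if_neg (hy k)]
      rw [this, this, add_zero]
  have hgeq : ∀ p x, g p x = g 0 x := by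
    intro p x
    by_cases hp : p = 0
    · rw [hp]
    · obtain ⟨r, hr1, hr2⟩ : ∃ r : Fin 4, p ≠ r ∧ 0 ≠ r := by
        clear hp
        revert p; decide
      have h1 := hg p r x hr1
      have h2 := hg 0 r x hr2
      exact add_right_cancel (h1.trans h2.symm)
  refine ⟨g 0, ?_, ?_⟩
  · intro x
    have := hg 0 1 x (by decide)
    rwa [hgeq 1 x] at this
  · intro s hs
    rw [hFg s hs]
    exact Finset.sum_congr rfl fun p _ => hgeq p _

end core2

theorem zero_mem_zuq {κ : Type*} (S : Set κ) : (0 : κ →₀ ZMod 2) ∈ zeroUnionQuadruples S :=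
  Or.inl rfl

theorem bohr_nhds_zero {G : Type*} [AddCommGroup G] (U : Set G)
    (hU : U ∈ @nhds G (bohrTopology G) 0) :
    ∃ T : Set (G →+ AddCircle (1 : ℝ)), T.Finite ∧ ∀ x, (∀ η ∈ T, η x = 0) → x ∈ U := by
  unfold bohrTopology at hU
  rw [nhds_iInf, Filter.mem_iInf] at hU
  obtain ⟨T, hT, V, hV, rfl⟩ := hU
  refine ⟨T, hT, fun x hx => ?_⟩
  rw [Set.mem_iInter]
  rintro ⟨η, hη⟩
  have h1 := hV ⟨η, hη⟩
  rw [nhds_induced, Filter.mem_comap] at h1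
  obtain ⟨W, hW, hWV⟩ := h1
  apply hWV
  have h2 := mem_of_mem_nhds hW
  show η x ∈ W
  rw [hx η hη]
  simpa using h2

theorem bohr_char_continuous {G : Type*} [AddCommGroup G] (χ : G →+ AddCircle (1 : ℝ)) :
    @Continuous _ _ (bohrTopology G) _ χ := by
  unfold bohrTopology
  exact continuous_iInf_dom continuous_induced_dom

theorem finite_two_torsion : {y : AddCircle (1 : ℝ) | y + y = 0}.Finite := by
  haveI : Fact ((0 : ℝ) < 1) := ⟨one_pos⟩
  have := AddCircle.finite_torsion (1 : ℝ) (n := 2) (by norm_num)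
  refine this.subset ?_
  intro y hy
  show 2 • y = 0
  rw [two_nsmul]
  exact hy

theorem cont_color {κ H : Type*} [AddCommGroup H]
    (f : (zeroUnionQuadruples (Set.univ : Set κ)) → H)
    (hf : @Continuous _ _ (@instTopologicalSpaceSubtype _ _ (bohrTopology (κ →₀ ZMod 2)))
      (bohrTopology H) f) (χ : H →+ AddCircle (1 : ℝ)) (z : AddCircle (1 : ℝ)) (hz : z ≠ 0) :
    ∃ (C : Type) (_ : Finite C) (c : κ → C), ∀ a b a' b' : κ, c a = c b → c a' = c b' →
      ∀ h : Finsupp.single a 1 + Finsupp.single b 1 + (Finsupp.single a' 1 + Finsupp.single b' 1) ∈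
        zeroUnionQuadruples (Set.univ : Set κ),
      χ (f ⟨_, h⟩ - f ⟨0, zero_mem_zuq _⟩) ≠ z := by
  letI t1 := bohrTopology (κ →₀ ZMod 2)
  letI t2 := bohrTopology H
  have hcont : Continuous (fun x => χ (f x) - χ (f ⟨0, zero_mem_zuq _⟩)) :=
    ((bohr_char_continuous χ).comp hf).sub continuous_const
  have hopen : IsOpen {x | χ (f x) - χ (f ⟨0, zero_mem_zuq _⟩) ≠ z} :=
    isOpen_compl_singleton.preimage hcont
  have hmem : {x | χ (f x) - χ (f ⟨0, zero_mem_zuq _⟩) ≠ z} ∈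
      nhds (⟨0, zero_mem_zuq _⟩ : zeroUnionQuadruples (Set.univ : Set κ)) := by
    refine hopen.mem_nhds ?_
    show _ - _ ≠ z
    rw [sub_self]
    exact hz.symm
  rw [nhds_subtype, Filter.mem_comap] at hmem
  obtain ⟨U, hU, hUs⟩ := hmem
  obtain ⟨T, hT, hTU⟩ := bohr_nhds_zero U hU
  obtain ⟨n, ⟨e⟩⟩ := hT.fintype.finite.exists_equiv_fin
  have htors : ∀ (η : (κ →₀ ZMod 2) →+ AddCircle (1 : ℝ)) a,
      η (Finsupp.single a 1) + η (Finsupp.single a 1) = 0 := by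
    intro η a
    rw [← map_add, ← Finsupp.single_add]
    have : (1 : ZMod 2) + 1 = 0 := by decide
    rw [this, Finsupp.single_zero, map_zero]
  haveI : Finite {y : AddCircle (1 : ℝ) | y + y = 0} := finite_two_torsion.to_subtype
  refine ⟨Fin n → {y : AddCircle (1 : ℝ) | y + y = 0}, inferInstance,
    fun a l => ⟨(e.symm l).1 (Finsupp.single a 1), htors _ _⟩, ?_⟩
  intro a b a' b' hab hab' h
  have key : ∀ η ∈ T, ∀ a b : κ,
      (fun l => (⟨(e.symm l).1 (Finsupp.single a 1), htors _ _⟩ :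
        {y : AddCircle (1 : ℝ) | y + y = 0})) =
      (fun l => ⟨(e.symm l).1 (Finsupp.single b 1), htors _ _⟩) →
      η (Finsupp.single a 1 + Finsupp.single b 1) = 0 := by
    intro η hη a b hab
    have h1 := congrArg Subtype.val (congrFun hab (e ⟨η, hη⟩))
    simp only [Equiv.symm_apply_apply] at h1
    rw [map_add, ← h1, htors]
  have := hUs (a := ⟨_, h⟩) (hTU _ (fun η hη => by
    rw [map_add, key η hη a b hab, key η hη a' b' hab', add_zero]))
  rw [map_sub]
  exact this


/-- The element of the Boolean group attached to a finite set. -/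
noncomputable def indB {κ : Type*} (w : Finset κ) : κ →₀ ZMod 2 :=
  ∑ a ∈ w, Finsupp.single a 1

open Classical in
theorem indB_apply {κ : Type*} (w : Finset κ) (a : κ) : indB w a = if a ∈ w then 1 else 0 := by
  unfold indB
  rw [Finsupp.finsetSum_apply]
  simp [Finsupp.single_apply]

theorem indB_support {κ : Type*} (w : Finset κ) : (indB w).support = w := by
  classical
  ext a
  rw [Finsupp.mem_support_iff, indB_apply]
  simp

theorem indB_of_support {κ : Type*} (x : κ →₀ ZMod 2) : indB x.support = x := by
  classical
  ext1 a
  rw [indB_apply]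
  have h2 : ∀ y : ZMod 2, y ≠ 0 → (1 : ZMod 2) = y := by decide
  split_ifs with h
  · exact h2 _ (Finsupp.mem_support_iff.1 h)
  · exact (Finsupp.notMem_support_iff.1 h).symm

theorem indB_mem {κ : Type*} (w : Finset κ) (hw : w.card = 4) :
    indB w ∈ zeroUnionQuadruples (Set.univ : Set κ) :=
  Or.inr ⟨by rw [indB_support, hw], Set.subset_univ _⟩

theorem exists_rep {I : Type*} (g : I →₀ BQ) : ∃ (m : Σ n : ℕ, Fin n → BQ) (i : Fin m.1 → I),
    Function.Injective i ∧ (∀ j, m.2 j ≠ 0) ∧ g = ∑ j, Finsupp.single (i j) (m.2 j) := by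
  let e := g.support.equivFin
  refine ⟨⟨g.support.card, fun j => g (e.symm j).1⟩, fun j => (e.symm j).1, ?_, ?_, ?_⟩
  · exact Subtype.val_injective.comp e.symm.injective
  · intro j
    exact Finsupp.mem_support_iff.1 (e.symm j).2
  · conv_lhs => rw [← Finsupp.sum_single g]
    rw [Finsupp.sum, ← Finset.sum_coe_sort]
    exact (Equiv.sum_comp e.symm
      (fun a : g.support => Finsupp.single (a : I) (g a))).symm

open Classical in
theorem straighten {κ : Type*} {H : Type*} [AddCommGroup H]
    (hκ : (2 : Cardinal) ^ ((2 : Cardinal) ^ Cardinal.continuum) < Cardinal.mk κ)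
    (f : (zeroUnionQuadruples (Set.univ : Set κ)) → H)
    (hf : @Continuous _ _ (@instTopologicalSpaceSubtype _ _ (bohrTopology (κ →₀ ZMod 2)))
      (bohrTopology H) f) :
    ∃ (θ : H →+ (H →₀ BQ)) (E : ℕ → κ) (v : ℕ → (H →₀ BQ)), Function.Injective θ ∧
      Function.Injective E ∧ (∀ x, v x + v x = 0) ∧
      ∀ s : Fin 4 → ℕ, StrictMono s → ∀ x : zeroUnionQuadruples (Set.univ : Set κ),
        x.1 = ∑ q, Finsupp.single (E (s q)) 1 →
          θ (f x - f ⟨0, zero_mem_zuq _⟩) = ∑ q, v (s q) := by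
  obtain ⟨θ, hθ⟩ := exists_embedding H
  let F : Finset κ → (H →₀ BQ) := fun w =>
    if h : w.card = 4 then θ (f ⟨indB w, indB_mem w h⟩ - f ⟨0, zero_mem_zuq _⟩) else 0
  choose m i0 hi0 hm hrep using fun g : H →₀ BQ => exists_rep g
  obtain ⟨enc, henc⟩ := exists_injective_nat (Σ n : ℕ, Fin n → BQ)
  obtain ⟨Y, hY, hH⟩ := erdos_rado_four hκ (fun w => enc (m (F w)))
  let e : ℕ → κ := fun x => (hY.natEmbedding Y x).1
  have he : Function.Injective e := Subtype.val_injective.comp (hY.natEmbedding Y).injective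
  have heY : ∀ x, e x ∈ Y := fun x => (hY.natEmbedding Y x).2
  let W : (Fin 4 → ℕ) → Finset κ := fun s => Finset.univ.image (fun q => e (s q))
  have hWc : ∀ s, StrictMono s → (W s).card = 4 := by
    intro s hs
    have h1 := Finset.card_image_of_injective Finset.univ (he.comp hs.injective)
    rw [Finset.card_univ, Fintype.card_fin] at h1
    exact h1
  have hWY : ∀ s, ((W s : Finset κ) : Set κ) ⊆ Y := by
    intro s a ha
    simp only [W, Finset.coe_image, Set.mem_image] at ha
    obtain ⟨q, _, rfl⟩ := ha
    exact heY _
  have hWi : ∀ s, StrictMono s → indB (W s) = ∑ q, Finsupp.single (e (s q)) 1 := by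
    intro s hs
    simp only [indB, W]
    rw [Finset.sum_image]
    intro a _ b _ hab
    exact hs.injective (he hab)
  obtain ⟨⟨n, d⟩, hnd⟩ : ∃ m0, m0 = m (F (W Fin.val)) := ⟨_, rfl⟩
  have hsame : ∀ s, StrictMono s → m (F (W s)) = ⟨n, d⟩ := by
    intro s hs
    rw [hnd]
    exact henc (hH _ _ (hWY _) (hWY _) (hWc s hs) (hWc _ Fin.val_strictMono))
  have hd : ∀ j, d j ≠ 0 := by
    have h1 := hm (F (W Fin.val))
    rw [← hnd] at h1
    exact h1
  have hD : ∀ s : Fin 4 → ℕ, ∃ i : Fin n → H, StrictMono s →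
      Function.Injective i ∧ F (W s) = ∑ j, Finsupp.single (i j) (d j) := by
    intro s
    by_cases hs : StrictMono s
    · have h1 : ∃ i : Fin (m (F (W s))).1 → H, Function.Injective i ∧
          F (W s) = ∑ j, Finsupp.single (i j) ((m (F (W s))).2 j) :=
        ⟨i0 _, hi0 _, hrep _⟩
      rw [hsame s hs] at h1
      obtain ⟨i, hi⟩ := h1
      exact ⟨i, fun _ => hi⟩
    · exact ⟨0, fun h => absurd h hs⟩
  choose D hD using hD
  obtain ⟨M, hM, hI⟩ := exists_indisc D
  have hcz : ContZero (fun s => ∑ j, Finsupp.single (D (M ∘ s) j) (d j)) := by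
    intro χ z hz
    obtain ⟨C, hC, c, hc⟩ := cont_color f hf (χ.comp θ) z hz
    refine ⟨C, hC, fun x => c (e (M x)), ?_⟩
    intro s hs p q u v hnod hpq huv
    simp only
    rw [← (hD _ (hM.comp hs)).2]
    simp only [F]
    rw [dif_pos (hWc _ (hM.comp hs))]
    have heq : indB (W (M ∘ s)) = Finsupp.single (e (M (s p))) 1 + Finsupp.single (e (M (s q))) 1 +
        (Finsupp.single (e (M (s u))) 1 + Finsupp.single (e (M (s v))) 1) := by
      rw [hWi _ (hM.comp hs), univ_of_nodup p q u v hnod]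
      simp only [List.nodup_cons, List.mem_cons, List.not_mem_nil, or_false, not_or] at hnod
      rw [Finset.sum_insert (by simp; tauto), Finset.sum_insert (by simp; tauto),
        Finset.sum_insert (by simp; tauto), Finset.sum_singleton, add_assoc]
      rfl
    have hmem := indB_mem _ (hWc _ (hM.comp hs))
    have hmem' := hmem
    rw [heq] at hmem'
    have h1 := hc _ _ _ _ hpq huv hmem'
    have h2 : (⟨indB (W (M ∘ s)), hmem⟩ : zeroUnionQuadruples (Set.univ : Set κ)) = ⟨_, hmem'⟩ :=
      Subtype.ext heq
    rw [h2]
    exact h1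
  obtain ⟨v, hv, hvs⟩ := core_linear hI (fun s hs => (hD _ (hM.comp hs)).1) hd hcz
  refine ⟨θ, fun x => e (M (4 * x + 4)), v, hθ, ?_, hv, ?_⟩
  · intro a b hab
    have := hM.injective (he hab)
    omega
  · intro s hs x hx
    rw [← hvs s hs]
    have hs4 : StrictMono (fun q => 4 * s q + 4) := by
      intro a c hac
      have := hs hac
      simp only
      omega
    have h1 := (hD _ (hM.comp hs4)).2
    rw [← h1]
    simp only [F]
    rw [dif_pos (hWc _ (hM.comp hs4))]
    have h2 : x = ⟨indB _, indB_mem _ (hWc _ (hM.comp hs4))⟩ := by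
      apply Subtype.ext
      rw [hx]
      exact (hWi _ (hM.comp hs4)).symm
    rw [← h2]

/-- The homomorphism out of the Boolean group given by 2-torsion values on the basis. -/
theorem exists_hom {κ A : Type*} [AddCommGroup A] (w : κ → A) (hw : ∀ a, w a + w a = 0) :
    ∃ L : (κ →₀ ZMod 2) →+ A, ∀ a, L (Finsupp.single a 1) = w a := by
  refine ⟨Finsupp.liftAddHom (fun a => ZMod.lift 2 ⟨zmultiplesHom A (w a), ?_⟩), ?_⟩
  · simp [two_zsmul, hw]
  · intro a
    rw [Finsupp.liftAddHom_apply_single]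
    have := ZMod.lift_coe 2 (⟨zmultiplesHom A (w a), by simp [two_zsmul, hw]⟩ :
      {f : ℤ →+ A // f ((2 : ℕ) : ℤ) = 0}) 1
    simpa using this

/-- (Straightening law) Let `H` be an abelian group and `κ > 2^(2^𝔠)`. Every continuous map
`f : {0} ∪ [κ]⁴ → H^#` (topology induced from `B_κ^#`) is linear on `{0} ∪ [S]⁴` for some
infinite `S ⊆ κ`: it agrees there with `h + a` for a homomorphism `h` defined on the
subgroup spanned by `{0} ∪ [S]⁴` and a constant `a ∈ H`. -/
theorem bohr_straightening_boolean (κ H : Type*) [AddCommGroup H]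
    (hκ : (2 : Cardinal) ^ ((2 : Cardinal) ^ Cardinal.continuum) < Cardinal.mk κ) :
    letI := bohrTopology (κ →₀ ZMod 2)
    letI := bohrTopology H
    ∀ f : (zeroUnionQuadruples (Set.univ : Set κ)) → H,
      Continuous f →
        ∃ S : Set κ, S.Infinite ∧
          ∃ (h : (AddSubgroup.closure (zeroUnionQuadruples S)) →+ H) (a : H),
            ∀ (x : zeroUnionQuadruples (Set.univ : Set κ))
              (hx : (x : κ →₀ ZMod 2) ∈ zeroUnionQuadruples S),
              f x = h ⟨↑x, AddSubgroup.subset_closure hx⟩ + a := by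
  intro f hf
  obtain ⟨θ, E, v, hθ, hE, hv, hlin⟩ := straighten hκ f hf
  obtain ⟨L, hL⟩ := exists_hom (Function.extend E v 0) (by
    intro a
    by_cases h : ∃ x, E x = a
    · obtain ⟨x, rfl⟩ := h
      rw [hE.extend_apply]
      exact hv x
    · rw [Function.extend_apply' _ _ _ h]
      simp)
  have hLf : ∀ x : zeroUnionQuadruples (Set.univ : Set κ),
      (x : κ →₀ ZMod 2) ∈ zeroUnionQuadruples (Set.range E) →
      θ (f x - f ⟨0, zero_mem_zuq _⟩) = L x := by
    classical
    intro x hx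
    rcases hx with hx | ⟨hc, hS⟩
    · have : x = ⟨0, zero_mem_zuq _⟩ := Subtype.ext hx
      rw [this, sub_self, map_zero, map_zero]
    · let T : Finset ℕ := x.1.support.preimage E hE.injOn
      have hTi : T.image E = x.1.support := by
        rw [Finset.image_preimage]
        refine Finset.filter_true_of_mem fun a ha => hS ha
      have hTc : T.card = 4 := by
        rw [← hc, ← hTi, Finset.card_image_of_injective _ hE]
      let s := T.orderEmbOfFin hTc
      have hsum : ∀ {A : Type _} [AddCommMonoid A] (g : ℕ → A), ∑ x ∈ T, g x = ∑ q, g (s q) := by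
        intro A _ g
        rw [← Finset.image_orderEmbOfFin_univ T hTc, Finset.sum_image]
        intro a _ b _ hab
        exact s.injective hab
      have hx2 : x.1 = ∑ q, Finsupp.single (E (s q)) 1 := by
        rw [← hsum (fun y => Finsupp.single (E y) (1 : ZMod 2))]
        conv_lhs => rw [← indB_of_support x.1, ← hTi]
        unfold indB
        rw [Finset.sum_image hE.injOn]
      rw [hlin s s.strictMono x hx2, hx2, map_sum]
      refine Finset.sum_congr rfl fun q _ => ?_
      rw [hL, hE.extend_apply]
  have hle : AddSubgroup.closure (zeroUnionQuadruples (Set.range E)) ≤ θ.range.comap L := by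
    rw [AddSubgroup.closure_le]
    intro x hx
    have hx' : x ∈ zeroUnionQuadruples (Set.univ : Set κ) := by
      rcases hx with hx | hx
      · exact Or.inl hx
      · exact Or.inr ⟨hx.1, Set.subset_univ _⟩
    exact ⟨_, hLf ⟨x, hx'⟩ hx⟩
  let h : (AddSubgroup.closure (zeroUnionQuadruples (Set.range E))) →+ H :=
    (AddMonoidHom.ofInjective hθ).symm.toAddMonoidHom.comp
      ((L.comp (AddSubgroup.subtype _)).codRestrict θ.range (fun x => hle x.2))
  have hh : ∀ x, θ (h x) = L x := by
    intro x
    exact congrArg Subtype.val ((AddMonoidHom.ofInjective hθ).apply_symm_apply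
      (((L.comp (AddSubgroup.subtype _)).codRestrict θ.range (fun x => hle x.2)) x))
  refine ⟨Set.range E, Set.infinite_range_of_injective hE, h, f ⟨0, zero_mem_zuq _⟩, ?_⟩
  intro x hx
  have : f x - f ⟨0, zero_mem_zuq _⟩ = h ⟨↑x, AddSubgroup.subset_closure hx⟩ := by
    apply hθ
    rw [hh, hLf x hx]
  rw [← this, sub_add_cancel]
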